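/- Let G = (V, E) be a connected graph, t and c positive integers, and x a vertex of G. Then the number of simple (t, c)-cuts (V', V∖V') with x ∈ V' is at most t^c. -/

import Mathlib

open SimpleGraph

/-- The cut-set of a vertex set `A`: edges of `G` with one endpoint in `A` and one outside. -/
def ecut {V : Type*} (G : SimpleGraph V) (A : Set V) : Set (Sym2 V) :=
  {e | e ∈ G.edgeSet ∧ ∃ u v, e = s(u, v) ∧ u ∈ A ∧ v ∉ A}

/-- Edges all of whose endpoints lie in `A`. -/
def edgesWithin {V : Type*} (A : Set V) : Set (Sym2 V) :=
  {e | ∀ x ∈ e, x ∈ A}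

/-- The set of endpoints of a set of edges. -/
def endpts {V : Type*} (F : Set (Sym2 V)) : Set V :=
  {x | ∃ e ∈ F, x ∈ e}

/-- `F` intercepts the cut `(A, Aᶜ)`: no connected component of `G` with the edges of `F`
removed contains all edges of the cut-set of `A`. -/
def Intercepts {V : Type*} (G : SimpleGraph V) (F : Set (Sym2 V)) (A : Set V) : Prop :=
  ¬ ∃ u : V, ∀ e ∈ ecut G A,
    e ∈ (G.deleteEdges F).edgeSet ∧ ∀ x ∈ e, (G.deleteEdges F).Reachable u x

/-- A cut `(A, Aᶜ)` is atomic if both sides induce connected subgraphs. -/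
def AtomicCut {V : Type*} (G : SimpleGraph V) (A : Set V) : Prop :=
  (G.induce A).Connected ∧ (G.induce Aᶜ).Connected

/-- Two cuts are parallel if one side of the first is contained in one side of the second. -/
def ParallelCuts {V : Type*} (A B : Set V) : Prop :=
  A ⊆ B ∨ A ⊆ Bᶜ ∨ Aᶜ ⊆ B ∨ Aᶜ ⊆ Bᶜ

/-- A partition of the vertex set into nonempty clusters. -/
def IsVertexPartition {V : Type*} (Pa : Set (Set V)) : Prop :=
  (∀ P ∈ Pa, P.Nonempty) ∧ ∀ x : V, ∃! P, P ∈ Pa ∧ x ∈ P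

/-- The intercluster edges of a vertex partition. -/
def interEdges {V : Type*} (G : SimpleGraph V) (Pa : Set (Set V)) : Set (Sym2 V) :=
  {e | e ∈ G.edgeSet ∧ ∃ u v, e = s(u, v) ∧ ∀ P ∈ Pa, ¬(u ∈ P ∧ v ∈ P)}

/-- `W` is the vertex set of a connected component of `G`. -/
def IsComponentSet {V : Type*} (G : SimpleGraph V) (W : Set V) : Prop :=
  ∃ v : V, W = {u | G.Reachable u v}

/-- `E'` is an `IA_H(T, t, q, d, c)` set: it is the set of intercluster edges of a vertex
partition with connected parts, and within each connected component `W` of `H`, for every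
nonempty `T' ⊆ T ∩ W` admitting a `(T', T∖T', t, d)`-cut of size `α ≤ d`, there is a
`(T', T∖T', q, α)`-cut whose cut-set has at most `max (α - c) 0` edges inside any single part. -/
def IsIASet {V : Type*} (H : SimpleGraph V) (T : Set V) (t q d c : ℕ)
    (E' : Set (Sym2 V)) : Prop :=
  ∃ Pa : Set (Set V), IsVertexPartition Pa ∧ (∀ P ∈ Pa, (H.induce P).Connected) ∧
    E' = interEdges H Pa ∧
    ∀ W : Set V, IsComponentSet H W →
      ∀ T' : Set V, T' ⊆ T ∩ W → T'.Nonempty → ∀ α : ℕ, α ≤ d →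
        (∃ A : Set V, A ⊆ W ∧ A.ncard ≤ t ∧ A ∩ T = T' ∧ (ecut H A).ncard = α) →
        ∃ B : Set V, B ⊆ W ∧ B.ncard ≤ q ∧ B ∩ T = T' ∧ (ecut H B).ncard ≤ α ∧
          ∀ P ∈ Pa, (ecut H B ∩ edgesWithin P).ncard ≤ α - c

/-- A partial search tree from `x`: vertex set `S`, edge set `T`. -/
lemma exists_search_tree {V : Type*} [Fintype V] [DecidableEq V] (H : SimpleGraph V) (x : V)
    (n : ℕ) : ∃ (S : Finset V) (T : Finset (Sym2 V)), x ∈ S ∧ T.card + 1 ≤ S.card ∧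
      S.card ≤ n + 1 ∧ (S.card = n + 1 ∨ ∀ u v, u ∈ S → H.Adj u v → v ∈ S) ∧
      ∀ A : Set V, x ∈ A → ¬ (S : Set V) ⊆ A →
        ∃ u v, s(u, v) ∈ T ∧ H.Adj u v ∧ u ∈ A ∧ v ∉ A := by
  induction n with
  | zero =>
    refine ⟨{x}, ∅, by simp, by simp, by simp, by simp, ?_⟩
    intro A hx h
    simp [hx] at h
  | succ n ih =>
    obtain ⟨S, T, hx, hT, hS, hcl, hA⟩ := ih
    by_cases hc : ∀ u v, u ∈ S → H.Adj u v → v ∈ S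
    · exact ⟨S, T, hx, hT, by omega, Or.inr hc, hA⟩
    have hS' : S.card = n + 1 := hcl.resolve_right hc
    push Not at hc
    obtain ⟨u, w, hu, huw, hw⟩ := hc
    refine ⟨insert w S, insert s(u, w) T, by simp [hx], ?_, ?_, ?_, ?_⟩
    · have := Finset.card_insert_le s(u, w) T
      rw [Finset.card_insert_of_notMem hw]; omega
    · rw [Finset.card_insert_of_notMem hw]; omega
    · left; rw [Finset.card_insert_of_notMem hw]; omega
    · intro A hxA h
      by_cases hSA : (S : Set V) ⊆ A
      · refine ⟨u, w, by simp, huw, hSA hu, fun hwA => h ?_⟩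
        rw [Finset.coe_insert]
        exact Set.insert_subset hwA hSA
      · obtain ⟨a, b, h1, h2, h3, h4⟩ := hA A hxA hSA
        exact ⟨a, b, by simp [h1], h2, h3, h4⟩

lemma subset_of_closed {V : Type*} (G : SimpleGraph V) (A S : Set V) (U : Set (Sym2 V)) (x : V)
    (hxA : x ∈ A) (hxS : x ∈ S) (hA : (G.induce A).Connected) (hU : U ⊆ ecut G A)
    (hcl : ∀ u v, u ∈ S → (G.deleteEdges U).Adj u v → v ∈ S) : A ⊆ S := by
  intro y hy
  have h := hA.preconnected ⟨x, hxA⟩ ⟨y, hy⟩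
  rw [SimpleGraph.reachable_iff_reflTransGen] at h
  suffices H : ∀ z : A, Relation.ReflTransGen (G.induce A).Adj ⟨x, hxA⟩ z → (z : V) ∈ S from
    H _ h
  intro z hz
  induction hz with
  | refl => exact hxS
  | @tail b d _ hbd ih =>
    refine hcl b d ih ?_
    rw [SimpleGraph.deleteEdges_adj]
    refine ⟨hbd, fun hm => ?_⟩
    obtain ⟨_, u, v, he, hu, hv⟩ := hU hm
    rw [Sym2.eq_iff] at he
    rcases he with ⟨_, h2⟩ | ⟨h1, _⟩
    · exact hv (h2 ▸ d.2)
    · exact hv (h1 ▸ b.2)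

lemma cut_count {V : Type*} [Fintype V] [DecidableEq V]
    (G : SimpleGraph V) (t : ℕ) (ht : 0 < t) (x : V) (k : ℕ) : ∀ U : Finset (Sym2 V),
    {A : Set V | x ∈ A ∧ (G.induce A).Connected ∧ A.ncard ≤ t ∧ (U : Set (Sym2 V)) ⊆ ecut G A ∧
      (ecut G A).ncard ≤ U.card + k}.ncard ≤ t ^ k := by
  induction k with
  | zero =>
    intro U
    obtain ⟨S, T, hx, hT, hS, hcl, hA⟩ := exists_search_tree (G.deleteEdges U) x t
    rw [pow_zero, Set.ncard_le_one_iff_subset_singleton]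
    refine ⟨(S : Set V), ?_⟩
    rintro A ⟨hxA, hconn, hAt, hU, hcard⟩
    have hSA : (S : Set V) ⊆ A := by
      by_contra h
      obtain ⟨u, v, _, hadj, hu, hv⟩ := hA A hxA h
      rw [SimpleGraph.deleteEdges_adj] at hadj
      have heq : (U : Set (Sym2 V)) = ecut G A :=
        Set.eq_of_subset_of_ncard_le hU (by rw [Set.ncard_coe_finset]; omega) (Set.toFinite _)
      apply hadj.2
      rw [heq]
      exact ⟨hadj.1, u, v, rfl, hu, hv⟩
    have h1 := Set.ncard_le_ncard hSA (Set.toFinite _)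
    rw [Set.ncard_coe_finset] at h1
    have hcl' := hcl.resolve_left (by omega)
    exact (subset_of_closed G A S U x hxA hx hconn hU hcl').antisymm hSA
  | succ k ih =>
    intro U
    obtain ⟨S, T, hx, hT, hS, hcl, hA⟩ := exists_search_tree (G.deleteEdges U) x t
    set F : Finset (Sym2 V) → Set (Set V) := fun W => {A : Set V | x ∈ A ∧
      (G.induce A).Connected ∧ A.ncard ≤ t ∧ (W : Set (Sym2 V)) ⊆ ecut G A ∧
      (ecut G A).ncard ≤ W.card + k} with hF
    set F0 : Set (Set V) := {A : Set V | x ∈ A ∧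
      (G.induce A).Connected ∧ A.ncard ≤ t ∧ (U : Set (Sym2 V)) ⊆ ecut G A ∧
      (ecut G A).ncard ≤ U.card + (k + 1)} with hF0
    have hcov : ∀ A ∈ F0, ¬ (S : Set V) ⊆ A → A ∈ ⋃ e ∈ T, F (insert e U) := by
      rintro A ⟨hxA, hconn, hAt, hU, hcard⟩ h
      obtain ⟨u, v, he, hadj, hu, hv⟩ := hA A hxA h
      rw [SimpleGraph.deleteEdges_adj] at hadj
      simp only [Set.mem_iUnion]
      refine ⟨s(u, v), he, hxA, hconn, hAt, ?_, ?_⟩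
      · rw [Finset.coe_insert]
        exact Set.insert_subset ⟨hadj.1, u, v, rfl, hu, hv⟩ hU
      · rw [Finset.card_insert_of_notMem (fun h => hadj.2 h)]
        omega
    have hun : (⋃ e ∈ T, F (insert e U)).ncard ≤ T.card * t ^ k := by
      refine (Finset.set_ncard_biUnion_le T _).trans ?_
      refine (Finset.sum_le_card_nsmul T _ (t ^ k) fun e _ => ih _).trans ?_
      simp
    have hsub : ∀ A ∈ F0, (S : Set V) ⊆ A → S.card ≤ t := by
      rintro A ⟨hxA, hconn, hAt, hU, hcard⟩ h
      have h1 := Set.ncard_le_ncard h (Set.toFinite _)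
      rw [Set.ncard_coe_finset] at h1
      omega
    by_cases hSt : S.card ≤ t
    · have hcl' := hcl.resolve_left (by omega)
      have hs : F0 ⊆ insert (S : Set V) (⋃ e ∈ T, F (insert e U)) := by
        intro A hAF
        by_cases h : (S : Set V) ⊆ A
        · left
          obtain ⟨hxA, hconn, hAt, hU, hcard⟩ := hAF
          exact (subset_of_closed G A S U x hxA hx hconn hU hcl').antisymm h
        · exact Or.inr (hcov A hAF h)
      calc F0.ncard ≤ _ := Set.ncard_le_ncard hs (Set.toFinite _)
        _ ≤ _ := Set.ncard_insert_le _ _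
        _ ≤ T.card * t ^ k + t ^ k := Nat.add_le_add hun (Nat.one_le_pow _ _ ht)
        _ = (T.card + 1) * t ^ k := by ring
        _ ≤ t * t ^ k := Nat.mul_le_mul_right _ (by omega)
        _ = t ^ (k + 1) := by ring
    · have hs : F0 ⊆ ⋃ e ∈ T, F (insert e U) := fun A hAF =>
        hcov A hAF fun h => hSt (hsub A hAF h)
      calc F0.ncard ≤ _ := Set.ncard_le_ncard hs (Set.toFinite _)
        _ ≤ T.card * t ^ k := hun
        _ ≤ t * t ^ k := Nat.mul_le_mul_right _ (by omega)
        _ = t ^ (k + 1) := by ring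

/-- For a connected graph `G`, positive integers `t` and `c`, and a vertex `x`, the number
of simple `(t, c)`-cuts `(V', V'ᶜ)` with `x ∈ V'` is at most `t ^ c`. -/
theorem statement_15 {V : Type*} [Fintype V] [DecidableEq V]
    (G : SimpleGraph V) (hG : G.Connected) (t c : ℕ) (ht : 0 < t) (hc : 0 < c) (x : V) :
    {A : Set V | x ∈ A ∧ (G.induce A).Connected ∧ A.ncard ≤ t ∧
      (ecut G A).ncard ≤ c}.ncard ≤ t ^ c := by
  have h := cut_count G t ht x c ∅
  simpa using h
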